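/- For every s ≥ 1, t ≥ 4 and sufficiently large n, the maximum number of edges of a 3-graph on n vertices which is F_{P,t}-free and has matching number at most s equals s·C(n−s,2) + O(n) when s ≤ t−2, and s·t(n−s,t−1) + O(n) when s ≥ t−1. -/

import Mathlib

open Finset

/-- Degree of a vertex in a 3-graph. -/
def degH {n : ℕ} (H : Finset (Finset (Fin n))) (v : Fin n) : ℕ :=
  (H.filter (fun e => v ∈ e)).card

/-- `H` is a 3-uniform hypergraph. -/
def Uniform3 {n : ℕ} (H : Finset (Finset (Fin n))) : Prop :=
  ∀ e ∈ H, e.card = 3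

/-- The matching number of `H` is at most `s`. -/
def MatchingAtMost {n : ℕ} (H : Finset (Finset (Fin n))) (s : ℕ) : Prop :=
  ∀ M ⊆ H, (M : Set (Finset (Fin n))).Pairwise (fun e f => Disjoint e f) → M.card ≤ s

/-- `H` contains a copy of the hypergraph with edge set `F`. -/
def HasCopy {α : Type*} [DecidableEq α] {n : ℕ}
    (F : Set (Finset α)) (H : Finset (Finset (Fin n))) : Prop :=
  ∃ f : α → Fin n, Function.Injective f ∧ ∀ e ∈ F, e.image f ∈ H

/-- Number of edges of the Turán graph `T(n, r)`. -/
def turanEdges (n r : ℕ) : ℕ := (SimpleGraph.turanGraph n r).edgeFinset.card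

/-- Edge set of the 3-graph `F_{P,t}` on `A ∪ [t]`, `A = Fin (t-1)`:
edges are `{aᵢ, i, j}` for `1 ≤ i < j ≤ t`. -/
def FPtEdges (t : ℕ) : Set (Finset (Fin (t - 1) ⊕ Fin t)) :=
  { e | ∃ (i : Fin (t - 1)) (j : Fin t), (i : ℕ) < (j : ℕ) ∧
      e = {Sum.inl i, Sum.inr (Fin.castLE (Nat.sub_le t 1) i), Sum.inr j} }

/-!
Upper bound. If no `s + 1` edges of `H` are pairwise disjoint, then at most `s` vertices have degree
above `3(s + 1)n`, since disjoint edges through `s + 1` such vertices could be chosen greedily. Let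
`S` be the set of these vertices. The edges avoiding `S`, which all meet a set of `3s` vertices, and
those meeting `S` twice are `O(n)` in number, so it remains to bound the total size of the link
graphs of the vertices of `S`, restricted to pairs outside `S`. For `s ≤ t - 2` the trivial bound
suffices. For `s ≥ t - 1`, with `k = t - 1`, the link graphs contain no `(k + 1)`-clique whose edges
from its `i`-th vertex to all later ones lie in the link of the same vertex `aᵢ`, the `aᵢ` being
distinct. A greedy choice of `aᵢ` and of the `i`-th vertex shows that some vertex has average degree
at most `(1 - 1 / k)n` over the link graphs (if `|S| ≥ k`), and deleting such vertices one at a time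
bounds their average size by that of the Turán graph up to `O(n)`.

Lower bound. Take all `{c, u, v}` with `c` in a set `S` of `s` vertices and `uv` an edge of a graph
`G` outside `S`, where `G` is complete or a Turán graph with `k` parts. In a copy of `F_{P,t}`,
after exchanging `a₁` and the vertex `1` if necessary, the vertex `1` lies outside `S`. This forces
`A ⊆ S` and makes `[t]` a clique of `G`.
-/

/-- A *star-rainbow clique* of a family `G` of graphs on `V`, indexed by colours in `ι`: a clique
`g 0, …, g k` whose edges from `g i` to all later vertices have the common colour `f i`, where the
colours `f 0, …, f (k - 1)` are distinct. Star-rainbow cliques in the link graphs of a 3-graph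
give rise to copies of `F_{P,k+1}`. -/
structure IsStarRainbowClique {ι V : Type*} (G : ι → SimpleGraph V) {k : ℕ}
    (f : Fin k → ι) (g : Fin (k + 1) → V) : Prop where
  injective_color : Function.Injective f
  adj : ∀ ⦃i : Fin k⦄ ⦃j : Fin (k + 1)⦄, i.castSucc < j → (G (f i)).Adj (g i.castSucc) (g j)

section StarRainbowClique

variable {ι V : Type*} {G : ι → SimpleGraph V} {k : ℕ}

namespace IsStarRainbowClique

variable {f : Fin k → ι} {g : Fin (k + 1) → V}

theorem injective_vertex (h : IsStarRainbowClique G f g) : Function.Injective g := by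
  refine .of_lt_imp_ne fun i j hij => ?_
  obtain ⟨i, rfl⟩ := Fin.exists_castSucc_eq.2 (Fin.ne_last_of_lt hij)
  exact (h.adj hij).ne

theorem cons (h : IsStarRainbowClique G f g) {c : ι} {v : V} (hc : ∀ i, f i ≠ c)
    (hv : ∀ j, (G c).Adj v (g j)) :
    IsStarRainbowClique G (Fin.cons c f : Fin (k + 1) → ι) (Fin.cons v g : Fin (k + 2) → V) where
  injective_color := Fin.cons_injective_iff.2 ⟨fun ⟨i, hi⟩ => hc i hi, h.injective_color⟩
  adj i j hij := by
    obtain ⟨j, rfl⟩ := Fin.exists_succ_eq.2 (Fin.ne_zero_of_lt hij)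
    cases i using Fin.cases with
    | zero => simpa using hv j
    | succ i =>
      rw [← Fin.succ_castSucc, Fin.succ_lt_succ_iff] at hij
      simpa [← Fin.succ_castSucc] using h.adj hij

end IsStarRainbowClique

theorem mul_lt_mul_of_succ_mul_add_lt {k a b x σ : ℕ} (ha : k ≤ a) (hx : (k + 1) * x < b + x)
    (hk : k ≠ 0) (h : (k + 1) * (σ + x) < (a + 1) * (b + x)) : k * σ < a * b := by
  zify at *
  have hdefect : (0 : ℤ) ≤ (a - k) * (b - k * x) := mul_nonneg (by linarith) (by linarith)
  have hscaled : (k : ℤ) * ((k + 1) * (σ + x)) < k * ((a + 1) * (b + x)) := by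
    gcongr
  have : ((k : ℤ) + 1) * (k * σ) < (k + 1) * (a * b) := by linarith
  exact lt_of_mul_lt_mul_left this (by positivity)

theorem exists_mul_card_not_adj_lt [∀ c, DecidableRel (G c).Adj] {C : Finset ι} {W : Finset V}
    (hC : C.Nonempty) (hW : W.Nonempty)
    (hsum : ∀ u ∈ W, k * ∑ c ∈ C, #{w ∈ W | ¬ (G c).Adj u w} < #C * #W) :
    ∃ v ∈ W, ∃ c ∈ C, k * #{w ∈ W | ¬ (G c).Adj v w} < #W ∧
      ∀ u ∈ W, ∀ d ∈ C, #{w ∈ W | ¬ (G c).Adj v w} ≤ #{w ∈ W | ¬ (G d).Adj u w} := by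
  obtain ⟨⟨v, c⟩, hvc, hmin⟩ := exists_min_image (W ×ˢ C)
    (fun p => #{w ∈ W | ¬ (G p.2).Adj p.1 w}) (hW.product hC)
  obtain ⟨hv, hc⟩ := mem_product.1 hvc
  refine ⟨v, hv, c, hc, Nat.lt_of_mul_lt_mul_left (a := #C) ?_,
    fun u hu d hd => hmin (u, d) (mk_mem_product hu hd)⟩
  calc #C * (k * #{w ∈ W | ¬ (G c).Adj v w})
      = k * ∑ _d ∈ C, #{w ∈ W | ¬ (G c).Adj v w} := by
        rw [sum_const, smul_eq_mul]
        ring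
    _ ≤ k * ∑ d ∈ C, #{w ∈ W | ¬ (G d).Adj v w} :=
        Nat.mul_le_mul_left _ (sum_le_sum fun d hd => hmin (v, d) (mk_mem_product hv hd))
    _ < #C * #W := hsum v hv

-- Greedy choice: take the pair `(v, c)` with the fewest non-neighbours, and recurse in the
-- `c`-neighbourhood of `v` with the remaining colours. By minimality, the number of vertices
-- deleted is at most the number of `c`-non-neighbours of any other vertex.
theorem exists_isStarRainbowClique_of_sum_card_not_adj_lt [∀ c, DecidableRel (G c).Adj]
    {C : Finset ι} {W : Finset V} (hC : k ≤ #C) (hW : W.Nonempty)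
    (hsum : k ≠ 0 → ∀ u ∈ W, k * ∑ c ∈ C, #{w ∈ W | ¬ (G c).Adj u w} < #C * #W) :
    ∃ (f : Fin k → ι) (g : Fin (k + 1) → V),
      IsStarRainbowClique G f g ∧ (∀ i, f i ∈ C) ∧ ∀ j, g j ∈ W := by
  classical
  induction k generalizing C W with
  | zero =>
    obtain ⟨w, hw⟩ := hW
    exact ⟨Fin.elim0, fun _ => w, ⟨fun i => i.elim0, fun i => i.elim0⟩, fun i => i.elim0,
      fun _ => hw⟩
  | succ k ih =>
    replace hsum := hsum k.succ_ne_zero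
    obtain ⟨v, hv, c, hc, hx, hmin⟩ := exists_mul_card_not_adj_lt (card_pos.1 (by lia)) hW hsum
    set x := #{w ∈ W | ¬ (G c).Adj v w}
    set W' := {w ∈ W | (G c).Adj v w}
    have hW' : #W' + x = #W := card_filter_add_card_filter_not _
    have hC' : #(C.erase c) + 1 = #C := card_erase_add_one hc
    have hsum' : ∀ u ∈ W, ∑ d ∈ C.erase c, #{w ∈ W' | ¬ (G d).Adj u w} + x ≤
        ∑ d ∈ C, #{w ∈ W | ¬ (G d).Adj u w} := fun u hu => by
      rw [← sum_erase_add _ _ hc]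
      gcongr
      exacts [filter_subset _ _, hmin u hu c hc]
    obtain ⟨f, g, hfg, hf, hg⟩ := ih (C := C.erase c) (W := W') (by lia)
      (card_pos.1 (by nlinarith)) fun hk u hu =>
        mul_lt_mul_of_succ_mul_add_lt (by lia) (hW' ▸ hx) hk <| by
          rw [hC', hW']
          exact (Nat.mul_le_mul_left _ (hsum' u (filter_subset _ _ hu))).trans_lt
            (hsum u (filter_subset _ _ hu))
    refine ⟨_, _, hfg.cons (fun i => ne_of_mem_erase (hf i)) fun j => (mem_filter.1 (hg j)).2,
      Fin.cases hc fun i => mem_of_mem_erase (hf i), Fin.cases hv fun j => filter_subset _ _ (hg j)⟩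

theorem exists_sum_degree_le_of_forall_not_isStarRainbowClique [Fintype V] [Nonempty V]
    [∀ c, DecidableRel (G c).Adj] {C : Finset ι} (hC : k ≤ #C)
    (hG : ∀ (f : Fin k → ι) (g : Fin (k + 1) → V), (∀ i, f i ∈ C) → ¬ IsStarRainbowClique G f g) :
    ∃ u, k * ∑ c ∈ C, (G c).degree u ≤ #C * (k - 1) * Fintype.card V := by
  obtain ⟨u, hu⟩ : ∃ u, #C * Fintype.card V ≤ k * ∑ c ∈ C, #{w | ¬ (G c).Adj u w} := by
    by_contra! hlt
    obtain ⟨f, g, hfg, hf, -⟩ := exists_isStarRainbowClique_of_sum_card_not_adj_lt hC univ_nonempty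
      fun _ u _ => hlt u
    exact hG f g hf hfg
  have hsplit : ∑ c ∈ C, (G c).degree u + ∑ c ∈ C, #{w | ¬ (G c).Adj u w} =
      #C * Fintype.card V := by
    rw [← sum_add_distrib, ← smul_eq_mul, ← sum_const]
    refine sum_congr rfl fun c _ => ?_
    rw [← SimpleGraph.card_neighborFinset_eq_degree, SimpleGraph.neighborFinset_eq_filter,
      card_filter_add_card_filter_not, card_univ]
  refine ⟨u, ?_⟩
  cases k with
  | zero => simp
  | succ k =>
    rw [Nat.add_sub_cancel]
    nlinarith

-- Deleting a vertex of small total degree reduces the bound for `|V|` to the one for `|V| - 1`.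
theorem mul_sum_card_edgeFinset_le_of_forall_not_isStarRainbowClique [Fintype V]
    [∀ c, DecidableRel (G c).Adj] {C : Finset ι} (hC : k ≤ #C)
    (hG : ∀ (f : Fin k → ι) (g : Fin (k + 1) → V), (∀ i, f i ∈ C) → ¬ IsStarRainbowClique G f g) :
    2 * k * ∑ c ∈ C, #(G c).edgeFinset ≤
      #C * (k - 1) * (Fintype.card V ^ 2 + Fintype.card V) := by
  classical
  induction hn : Fintype.card V generalizing V with
  | zero =>
    have := Fintype.card_eq_zero_iff.1 hn
    simp [Subsingleton.elim (G _) ⊥]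
  | succ n ih =>
    have : Nonempty V := Fintype.card_pos_iff.1 (by lia)
    obtain ⟨u, hu⟩ := exists_sum_degree_le_of_forall_not_isStarRainbowClique hC hG
    have hdelete : ∀ c, #((G c).induce {u}ᶜ).edgeFinset + (G c).degree u = #(G c).edgeFinset := by
      intro c
      rw [SimpleGraph.card_edgeFinset_induce_compl_singleton,
        SimpleGraph.card_edgeFinset_deleteIncidenceSet]
      exact Nat.sub_add_cancel (SimpleGraph.degree_le_card_edgeFinset _ _)
    have hrest := ih (G := fun c => (G c).induce {u}ᶜ)
      (fun f g hf h => hG f (fun j => g j) hf ⟨h.injective_color, h.adj⟩)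
      (by rw [Fintype.card_compl_set, hn, Fintype.card_unique, Nat.add_sub_cancel])
    rw [hn] at hu
    calc 2 * k * ∑ c ∈ C, #(G c).edgeFinset
        = 2 * k * ∑ c ∈ C, #((G c).induce {u}ᶜ).edgeFinset +
            2 * (k * ∑ c ∈ C, (G c).degree u) := by
          simp only [← hdelete, sum_add_distrib]
          ring
      _ ≤ #C * (k - 1) * (n ^ 2 + n) + 2 * (#C * (k - 1) * (n + 1)) := by gcongr
      _ = #C * (k - 1) * ((n + 1) ^ 2 + (n + 1)) := by ring

end StarRainbowClique

theorem exists_eq_insert_pair_of_card_eq_three {V : Type*} [DecidableEq V] {e : Finset V}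
    (he : #e = 3) {v z : V} (hv : v ∈ e) (hz : z ∈ e) (hvz : z ≠ v) : ∃ w, e = {v, z, w} := by
  have hz' : z ∈ e.erase v := mem_erase.2 ⟨hvz, hz⟩
  obtain ⟨w, hw⟩ : ∃ w, (e.erase v).erase z = {w} :=
    card_eq_one.1 (by rw [card_erase_of_mem hz', card_erase_of_mem hv, he])
  exact ⟨w, by rw [← hw, insert_erase hz', insert_erase hv]⟩

theorem exists_matching_forall_not_disjoint {V : Type*} [DecidableEq V] (H : Finset (Finset V))
    (hH : ∅ ∉ H) : ∃ M ⊆ H, (M : Set (Finset V)).Pairwise Disjoint ∧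
      ∀ e ∈ H, ¬ Disjoint e (M.biUnion id) := by
  induction H using Finset.induction_on with
  | empty => exact ⟨∅, by simp⟩
  | insert e H _ ih =>
    rw [mem_insert, not_or] at hH
    obtain ⟨M, hMH, hM, hcover⟩ := ih hH.2
    by_cases he : Disjoint e (M.biUnion id)
    · refine ⟨insert e M, insert_subset_insert _ hMH, ?_, ?_⟩
      · rw [coe_insert]
        refine hM.insert fun f hf _ => ?_
        have hef := (disjoint_biUnion_right _ _ _).1 he f hf
        exact ⟨hef, hef.symm⟩
      · rw [biUnion_insert, id, forall_mem_insert]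
        exact ⟨fun h => hH.1 (disjoint_self_iff_empty e |>.1 (disjoint_union_right.1 h).1).symm,
          fun f hf h => hcover f hf (disjoint_union_right.1 h).2⟩
    · exact ⟨M, hMH.trans (subset_insert _ _), hM, forall_mem_insert _ _ _ |>.2 ⟨he, hcover⟩⟩

section Matching

variable {n s : ℕ} {H : Finset (Finset (Fin n))}

theorem MatchingAtMost.mono {H' : Finset (Finset (Fin n))} (hM : MatchingAtMost H s)
    (h : H' ⊆ H) : MatchingAtMost H' s :=
  fun M hMH' => hM M (hMH'.trans h)

namespace Uniform3

theorem mono {H' : Finset (Finset (Fin n))} (hU : Uniform3 H) (h : H' ⊆ H) : Uniform3 H' :=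
  fun e he => hU e (h he)

theorem empty_notMem (hU : Uniform3 H) : ∅ ∉ H :=
  fun h => absurd (hU ∅ h) (by simp)

theorem card_filter_mem_not_disjoint_le (hU : Uniform3 H) {v : Fin n} {Z : Finset (Fin n)}
    (hv : v ∉ Z) : #{e ∈ H | v ∈ e ∧ ¬ Disjoint e Z} ≤ #Z * n := by
  have hsub : {e ∈ H | v ∈ e ∧ ¬ Disjoint e Z} ⊆
      (Z ×ˢ (univ : Finset (Fin n))).image fun p => {v, p.1, p.2} := by
    intro e he
    obtain ⟨heH, hve, heZ⟩ := mem_filter.1 he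
    obtain ⟨z, hze, hzZ⟩ := not_disjoint_iff.1 heZ
    obtain ⟨w, rfl⟩ := exists_eq_insert_pair_of_card_eq_three (hU e heH) hve hze
      (ne_of_mem_of_not_mem hzZ hv)
    exact mem_image.2 ⟨(z, w), mk_mem_product hzZ (mem_univ w), rfl⟩
  calc _ ≤ #(Z ×ˢ (univ : Finset (Fin n))) := (card_le_card hsub).trans card_image_le
    _ = #Z * n := by rw [card_product, card_univ, Fintype.card_fin]

theorem exists_mem_disjoint_of_lt_degH (hU : Uniform3 H) {v : Fin n} {Z : Finset (Fin n)}
    (hv : v ∉ Z) (hdeg : #Z * n < degH H v) : ∃ e ∈ H, v ∈ e ∧ Disjoint e Z := by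
  obtain ⟨e, he, heZ⟩ := exists_mem_notMem_of_card_lt_card
    ((hU.card_filter_mem_not_disjoint_le hv).trans_lt hdeg)
  simp only [mem_filter, not_and, not_not] at he heZ
  exact ⟨e, he.1, he.2, heZ he.1 he.2⟩

-- The matching is built edge by edge: `B` is the set of vertices used so far.
theorem exists_matching_of_forall_lt_degH (hU : Uniform3 H) {D : ℕ} {X B : Finset (Fin n)}
    (hdeg : ∀ v ∈ X, D * n < degH H v) (hXB : Disjoint X B) (hD : #B + 3 * #X ≤ D) :
    ∃ M ⊆ H, (M : Set (Finset (Fin n))).Pairwise Disjoint ∧ #M = #X ∧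
      ∀ e ∈ M, Disjoint e B := by
  induction X using Finset.induction_on generalizing B with
  | empty => exact ⟨∅, by simp⟩
  | insert v X hvX ih =>
    rw [card_insert_of_notMem hvX] at hD
    rw [disjoint_insert_left] at hXB
    rw [forall_mem_insert] at hdeg
    obtain ⟨e, heH, -, he⟩ := hU.exists_mem_disjoint_of_lt_degH (v := v) (Z := B ∪ X)
      (by simp [hXB.1, hvX])
      (lt_of_le_of_lt (Nat.mul_le_mul_right _ ((card_union_le B X).trans (by lia))) hdeg.1)
    rw [disjoint_union_right] at he
    obtain ⟨M, hMH, hM, hMX, hMB⟩ := ih (B := B ∪ e) hdeg.2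
      (disjoint_union_right.2 ⟨hXB.2, he.2.symm⟩)
      (by have := card_union_le B e; have := hU e heH; lia)
    simp only [disjoint_union_right] at hMB
    have heM : e ∉ M := fun h =>
      hU.empty_notMem (disjoint_self_iff_empty e |>.1 (hMB e h).2 ▸ heH)
    refine ⟨insert e M, insert_subset heH hMH, ?_, ?_, ?_⟩
    · rw [coe_insert]
      exact hM.insert fun f hf _ => ⟨(hMB f hf).2.symm, (hMB f hf).2⟩
    · rw [card_insert_of_notMem heM, card_insert_of_notMem hvX, hMX]
    · exact forall_mem_insert _ _ _ |>.2 ⟨he.1, fun f hf => (hMB f hf).1⟩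

theorem card_filter_lt_degH_le (hU : Uniform3 H) (hM : MatchingAtMost H s) :
    #{v | 3 * (s + 1) * n < degH H v} ≤ s := by
  by_contra! hlt
  obtain ⟨X, hX, hXs⟩ := exists_subset_card_eq (Nat.succ_le_of_lt hlt)
  obtain ⟨M, hMH, hMd, hMX, -⟩ := hU.exists_matching_of_forall_lt_degH (B := ∅)
    (fun v hv => (mem_filter.1 (hX hv)).2) (disjoint_empty_right _) (by simp [hXs])
  have := hM M hMH hMd
  lia

theorem exists_cover (hU : Uniform3 H) (hM : MatchingAtMost H s) :
    ∃ Z : Finset (Fin n), #Z ≤ 3 * s ∧ ∀ e ∈ H, ¬ Disjoint e Z := by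
  obtain ⟨M, hMH, hMd, hcover⟩ := exists_matching_forall_not_disjoint H hU.empty_notMem
  refine ⟨M.biUnion id, ?_, hcover⟩
  calc #(M.biUnion id) ≤ #M * 3 := card_biUnion_le_card_mul _ _ _ fun e he => (hU e (hMH he)).le
    _ ≤ 3 * s := by have := hM M hMH hMd; lia

-- `S` is the set of vertices of large degree; each edge missing `S` meets a cover of size `3s`.
theorem exists_card_filter_disjoint_le (hU : Uniform3 H) (hM : MatchingAtMost H s) :
    ∃ S : Finset (Fin n), #S ≤ s ∧
      #{e ∈ H | Disjoint e S} ≤ 3 * s * (3 * (s + 1) * n) := by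
  refine ⟨_, hU.card_filter_lt_degH_le hM, ?_⟩
  set S : Finset (Fin n) := {v | 3 * (s + 1) * n < degH H v}
  set H' := {e ∈ H | Disjoint e S}
  have hH' : H' ⊆ H := filter_subset _ _
  obtain ⟨Z, hZ, hcover⟩ := (hU.mono hH').exists_cover (hM.mono hH')
  have hsub : H' ⊆ (Z \ S).biUnion fun z => {e ∈ H | z ∈ e} := by
    intro e he
    obtain ⟨z, hze, hzZ⟩ := not_disjoint_iff.1 (hcover e he)
    have hzS : z ∉ S := disjoint_left.1 (mem_filter.1 he).2 hze
    exact mem_biUnion.2 ⟨z, mem_sdiff.2 ⟨hzZ, hzS⟩, mem_filter.2 ⟨hH' he, hze⟩⟩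
  calc #H' ≤ #(Z \ S) * (3 * (s + 1) * n) :=
        (card_le_card hsub).trans <| card_biUnion_le_card_mul _ _ _ fun z hz =>
          not_lt.1 fun h => (mem_sdiff.1 hz).2 (mem_filter.2 ⟨mem_univ z, h⟩)
    _ ≤ 3 * s * (3 * (s + 1) * n) := by
        gcongr
        exact (card_le_card sdiff_subset).trans hZ

end Uniform3

end Matching

/-- The link of the vertex `c` in the hypergraph `H`, restricted to the pairs avoiding `S`. -/
def linkGraph {V : Type*} [DecidableEq V] (H : Finset (Finset V)) (S : Finset V) (c : V) :
    SimpleGraph V where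
  Adj u w := u ≠ w ∧ u ∉ S ∧ w ∉ S ∧ {c, u, w} ∈ H
  symm := ⟨fun u w ⟨huw, hu, hw, h⟩ => ⟨huw.symm, hw, hu, by rwa [pair_comm]⟩⟩
  loopless := ⟨fun _ h => h.1 rfl⟩

instance {V : Type*} [DecidableEq V] (H : Finset (Finset V)) (S : Finset V) (c : V) :
    DecidableRel (linkGraph H S c).Adj :=
  fun u w => inferInstanceAs (Decidable (u ≠ w ∧ u ∉ S ∧ w ∉ S ∧ {c, u, w} ∈ H))

section UpperBound

variable {n s k : ℕ} {H : Finset (Finset (Fin n))}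

theorem Uniform3.card_filter_mem_disjoint_erase_le (hU : Uniform3 H) {S : Finset (Fin n)}
    (c : Fin n) :
    #{e ∈ H | c ∈ e ∧ Disjoint (e.erase c) S} ≤ #(linkGraph H S c).edgeFinset := by
  refine (card_le_card (t := (linkGraph H S c).edgeFinset.image fun z => insert c z.toFinset)
    fun e he => ?_).trans card_image_le
  obtain ⟨heH, hce, heS⟩ := mem_filter.1 he
  obtain ⟨u, w, huw, heq⟩ : ∃ u w, u ≠ w ∧ e.erase c = {u, w} :=
    card_eq_two.1 (by rw [card_erase_of_mem hce, hU e heH])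
  have he' : {c, u, w} = e := by rw [← heq, insert_erase hce]
  rw [heq, disjoint_insert_left, disjoint_singleton_left] at heS
  refine mem_image.2 ⟨s(u, w), ?_, by rw [Sym2.toFinset_mk_eq, he']⟩
  rw [SimpleGraph.mem_edgeFinset, SimpleGraph.mem_edgeSet]
  exact ⟨huw, heS.1, heS.2, he' ▸ heH⟩

-- An edge meeting `S` either meets it in at least two vertices or is a link edge of one of them.
theorem Uniform3.card_le_sum_card_linkGraph_add (hU : Uniform3 H) (S : Finset (Fin n)) :
    #H ≤ ∑ c ∈ S, #(linkGraph H S c).edgeFinset + #S * (#S * n) + #{e ∈ H | Disjoint e S} := by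
  have hcover : H ⊆ S.biUnion (fun c => {e ∈ H | c ∈ e ∧ Disjoint (e.erase c) S}) ∪
      S.biUnion (fun c => {e ∈ H | c ∈ e ∧ ¬ Disjoint e (S.erase c)}) ∪
      {e ∈ H | Disjoint e S} := by
    intro e he
    by_cases heS : Disjoint e S
    · exact mem_union_right _ (mem_filter.2 ⟨he, heS⟩)
    obtain ⟨c, hce, hcS⟩ := not_disjoint_iff.1 heS
    refine mem_union_left _ (mem_union.2 ?_)
    simp only [mem_biUnion, mem_filter, disjoint_erase_comm]
    by_cases hc : Disjoint e (S.erase c)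
    exacts [.inl ⟨c, hcS, he, hce, hc⟩, .inr ⟨c, hcS, he, hce, hc⟩]
  refine (card_le_card hcover).trans <| (card_union_le _ _).trans <| Nat.add_le_add_right
    ((card_union_le _ _).trans <| Nat.add_le_add ?_ ?_) _
  · exact card_biUnion_le.trans (sum_le_sum fun c _ => hU.card_filter_mem_disjoint_erase_le c)
  · refine card_biUnion_le_card_mul _ _ _ fun c _ => ?_
    exact (hU.card_filter_mem_not_disjoint_le (notMem_erase c S)).trans
      (Nat.mul_le_mul_right _ (card_le_card (erase_subset _ _)))

theorem Uniform3.exists_card_le_sum_card_linkGraph_add (hU : Uniform3 H)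
    (hM : MatchingAtMost H s) : ∃ S : Finset (Fin n), #S ≤ s ∧
      #H ≤ ∑ c ∈ S, #(linkGraph H S c).edgeFinset + (10 * s ^ 2 + 9 * s) * n := by
  obtain ⟨S, hS, hdisj⟩ := hU.exists_card_filter_disjoint_le hM
  refine ⟨S, hS, (hU.card_le_sum_card_linkGraph_add S).trans ?_⟩
  have : #S * (#S * n) ≤ s * (s * n) := by gcongr
  linarith

theorem hasCopy_FPtEdges_succ_iff : HasCopy (FPtEdges (k + 1)) H ↔
    ∃ f : Fin k ⊕ Fin (k + 1) → Fin n, Function.Injective f ∧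
      ∀ ⦃i : Fin k⦄ ⦃j : Fin (k + 1)⦄, i.castSucc < j →
        {f (.inl i), f (.inr i.castSucc), f (.inr j)} ∈ H := by
  refine exists_congr fun f => and_congr_right fun _ => ⟨fun h i j hij => ?_, ?_⟩
  · have he := h _ ⟨i, j, hij, rfl⟩
    rwa [image_insert, image_insert, image_singleton] at he
  · rintro h e ⟨i, j, hij, rfl⟩
    rw [image_insert, image_insert, image_singleton]
    exact h (i := i) (j := j) hij

theorem hasCopy_FPtEdges_of_isStarRainbowClique {S : Finset (Fin n)} (hk : k ≠ 0)
    {f : Fin k → Fin n} {g : Fin (k + 1) → Fin n} (hf : ∀ i, f i ∈ S)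
    (hfg : IsStarRainbowClique (linkGraph H S) f g) : HasCopy (FPtEdges (k + 1)) H := by
  have hg : ∀ j, g j ∉ S := fun j => by
    cases j using Fin.lastCases with
    | last => exact (hfg.adj (i := ⟨0, by lia⟩) (Fin.castSucc_lt_last _)).2.2.1
    | cast i => exact (hfg.adj (Fin.castSucc_lt_last i)).2.1
  exact hasCopy_FPtEdges_succ_iff.2 ⟨Sum.elim f g,
    hfg.injective_color.sumElim hfg.injective_vertex fun i j => ne_of_mem_of_not_mem (hf i) (hg j),
    fun i j hij => (hfg.adj hij).2.2.2⟩

theorem two_mul_choose_two_le_sq (n : ℕ) : 2 * n.choose 2 ≤ n ^ 2 := by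
  rw [Nat.choose_two_right, sq]
  exact (Nat.mul_div_le _ 2).trans (Nat.mul_le_mul_left n (n.sub_le 1))

theorem choose_two_le_choose_two_sub_add (n s : ℕ) :
    n.choose 2 ≤ (n - s).choose 2 + s * n := by
  induction s with
  | zero => simp
  | succ s ih =>
    obtain hn | ⟨m, hm⟩ : n - s = 0 ∨ ∃ m, n - s = m + 1 := by
      cases n - s <;> simp
    · rw [hn, Nat.choose_zero_succ] at ih
      rw [Nat.succ_mul]
      lia
    · rw [hm, Nat.choose_succ_succ' m 1, Nat.choose_one_right] at ih
      have : n - (s + 1) = m := by lia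
      rw [this, Nat.succ_mul]
      lia

theorem sub_one_mul_sq_le_turanEdges (hk : k ≠ 0) (m : ℕ) :
    (k - 1) * m ^ 2 ≤ 2 * k * turanEdges m k + k * (k + 2) * m := by
  obtain rfl | hm := Nat.eq_zero_or_pos m
  · simp
  have hrk : m % k ≤ k := (Nat.mod_lt _ (Nat.pos_of_ne_zero hk)).le
  have hrm : m % k ≤ m := Nat.mod_le _ _
  have hsq : (k - 1) * (m % k) ^ 2 ≤ k * (k * m) := by
    rw [sq]
    gcongr
    exact k.sub_le 1
  have hfloor : (m ^ 2 - (m % k) ^ 2) * (k - 1) ≤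
      2 * k * ((m ^ 2 - (m % k) ^ 2) * (k - 1) / (2 * k)) + 2 * k :=
    (Nat.lt_mul_div_succ _ (by lia)).le
  rw [turanEdges, SimpleGraph.card_edgeFinset_turanGraph]
  calc (k - 1) * m ^ 2 = (m ^ 2 - (m % k) ^ 2) * (k - 1) + (k - 1) * (m % k) ^ 2 := by
        rw [mul_comm _ (k - 1), ← mul_add, Nat.sub_add_cancel (Nat.pow_le_pow_left hrm 2)]
    _ ≤ _ := by nlinarith

theorem sub_one_mul_sq_add_le_turanEdges_sub (hk : k ≠ 0) (n s : ℕ) :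
    (k - 1) * (n ^ 2 + n) ≤ 2 * k * (turanEdges (n - s) k + (k + 2 * s + 3) * n) := by
  have hsq : n ^ 2 ≤ (n - s) ^ 2 + 2 * s * n := by
    have : n ≤ n - s + s := le_tsub_add
    have := n.sub_le s
    nlinarith
  calc (k - 1) * (n ^ 2 + n) ≤ (k - 1) * ((n - s) ^ 2 + 2 * s * n + n) := by gcongr
    _ = (k - 1) * (n - s) ^ 2 + (k - 1) * (2 * s * n + n) := by ring
    _ ≤ 2 * k * turanEdges (n - s) k + k * (k + 2) * n + k * (2 * s * n + n) := by
        refine Nat.add_le_add ((sub_one_mul_sq_le_turanEdges hk _).trans ?_) ?_ <;> gcongr <;> lia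
    _ ≤ 2 * k * (turanEdges (n - s) k + (k + 2 * s + 3) * n) := by nlinarith [Nat.zero_le (k * n)]

theorem card_le_mul_choose_two_add (hU : Uniform3 H) (hM : MatchingAtMost H s) :
    #H ≤ s * (n - s).choose 2 + (11 * s ^ 2 + 9 * s) * n := by
  obtain ⟨S, hS, hH⟩ := hU.exists_card_le_sum_card_linkGraph_add hM
  have hlinks : ∑ c ∈ S, #(linkGraph H S c).edgeFinset ≤ s * n.choose 2 := by
    refine (sum_le_card_nsmul _ _ _ fun c _ => ?_).trans (Nat.mul_le_mul_right _ hS)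
    simpa using (linkGraph H S c).card_edgeFinset_le_card_choose_two
  have := Nat.mul_le_mul_left s (choose_two_le_choose_two_sub_add n s)
  linarith

theorem mul_sum_card_linkGraph_le (hk : k ≠ 0) (hks : k ≤ s)
    (hF : ¬ HasCopy (FPtEdges (k + 1)) H) {S : Finset (Fin n)} (hS : #S ≤ s) :
    2 * k * ∑ c ∈ S, #(linkGraph H S c).edgeFinset ≤ s * (k - 1) * (n ^ 2 + n) := by
  obtain hkS | hSk := le_or_gt k #S
  · have hturan := mul_sum_card_edgeFinset_le_of_forall_not_isStarRainbowClique
      (G := linkGraph H S) hkS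
      fun f g hf hfg => hF (hasCopy_FPtEdges_of_isStarRainbowClique hk hf hfg)
    rw [Fintype.card_fin] at hturan
    exact hturan.trans (by gcongr)
  · have hlink : ∀ c ∈ S, 2 * #(linkGraph H S c).edgeFinset ≤ n ^ 2 := fun c _ =>
      (Nat.mul_le_mul_left 2 (by
        simpa using (linkGraph H S c).card_edgeFinset_le_card_choose_two)).trans
          (two_mul_choose_two_le_sq n)
    calc 2 * k * ∑ c ∈ S, #(linkGraph H S c).edgeFinset
        = k * ∑ c ∈ S, 2 * #(linkGraph H S c).edgeFinset := by rw [← mul_sum]; ring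
      _ ≤ s * ((k - 1) * (n ^ 2 + n)) := by
          gcongr
          exact (sum_le_card_nsmul _ _ _ hlink).trans
            (Nat.mul_le_mul (Nat.le_sub_one_of_lt hSk) (Nat.le_add_right _ _))
      _ = s * (k - 1) * (n ^ 2 + n) := by ring

theorem card_le_mul_turanEdges_add (hk : k ≠ 0) (hks : k ≤ s) (hU : Uniform3 H)
    (hM : MatchingAtMost H s) (hF : ¬ HasCopy (FPtEdges (k + 1)) H) :
    #H ≤ s * turanEdges (n - s) k + (12 * s ^ 2 + 12 * s + s * k) * n := by
  obtain ⟨S, hS, hH⟩ := hU.exists_card_le_sum_card_linkGraph_add hM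
  have hlinks : ∑ c ∈ S, #(linkGraph H S c).edgeFinset ≤
      s * (turanEdges (n - s) k + (k + 2 * s + 3) * n) := by
    refine Nat.le_of_mul_le_mul_left ?_ (Nat.mul_pos two_pos (Nat.pos_of_ne_zero hk))
    calc 2 * k * ∑ c ∈ S, #(linkGraph H S c).edgeFinset
        ≤ s * (k - 1) * (n ^ 2 + n) := mul_sum_card_linkGraph_le hk hks hF hS
      _ = s * ((k - 1) * (n ^ 2 + n)) := by ring
      _ ≤ s * (2 * k * (turanEdges (n - s) k + (k + 2 * s + 3) * n)) :=
          Nat.mul_le_mul_left s (sub_one_mul_sq_add_le_turanEdges_sub hk n s)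
      _ = 2 * k * (s * (turanEdges (n - s) k + (k + 2 * s + 3) * n)) := by ring
  linarith

end UpperBound

/-- The cone over `G` with set of apices `S`: the 3-graph of all `{c, u, v}` with `c ∈ S` and `uv`
an edge of `G`. It is meant for graphs `G` without edges meeting `S`. -/
def cone {V : Type*} [DecidableEq V] [Fintype V] (S : Finset V) (G : SimpleGraph V)
    [DecidableRel G.Adj] : Finset (Finset V) :=
  (S ×ˢ G.edgeFinset).image fun p => insert p.1 p.2.toFinset

section Cone

variable {V : Type*} [DecidableEq V] [Fintype V] {S : Finset V} {G : SimpleGraph V}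
  [DecidableRel G.Adj] {e : Finset V}

theorem mem_cone : e ∈ cone S G ↔ ∃ c ∈ S, ∃ u v, G.Adj u v ∧ e = {c, u, v} := by
  constructor
  · intro he
    obtain ⟨⟨c, z⟩, hcz, rfl⟩ := mem_image.1 he
    obtain ⟨hc, hz⟩ := mem_product.1 hcz
    induction z using Sym2.ind with
    | _ u v =>
      exact ⟨c, hc, u, v, SimpleGraph.mem_edgeFinset.1 hz, by rw [Sym2.toFinset_mk_eq]⟩
  · rintro ⟨c, hc, u, v, huv, rfl⟩
    exact mem_image.2 ⟨(c, s(u, v)), mk_mem_product hc (SimpleGraph.mem_edgeFinset.2 huv),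
      by rw [Sym2.toFinset_mk_eq]⟩

theorem exists_mem_of_mem_cone (he : e ∈ cone S G) : ∃ c ∈ S, c ∈ e := by
  obtain ⟨c, hc, u, v, -, rfl⟩ := mem_cone.1 he
  exact ⟨c, hc, mem_insert_self _ _⟩

theorem adj_of_mem_cone (he : e ∈ cone S G) {u v : V} (hu : u ∈ e) (hv : v ∈ e) (huv : u ≠ v)
    (huS : u ∉ S) (hvS : v ∉ S) : G.Adj u v := by
  obtain ⟨c, hc, x, y, hxy, rfl⟩ := mem_cone.1 he
  have huc := ne_of_mem_of_not_mem hc huS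
  have hvc := ne_of_mem_of_not_mem hc hvS
  simp only [mem_insert, mem_singleton] at hu hv
  grind [hxy.symm]

variable (hG : ∀ ⦃u v⦄, G.Adj u v → u ∉ S)

include hG

theorem eq_of_mem_cone (he : e ∈ cone S G) {u v : V} (hu : u ∈ e) (hv : v ∈ e)
    (huS : u ∈ S) (hvS : v ∈ S) : u = v := by
  obtain ⟨c, -, x, y, hxy, rfl⟩ := mem_cone.1 he
  simp only [mem_insert, mem_singleton] at hu hv
  grind [hG hxy, hG hxy.symm]

theorem card_eq_three_of_mem_cone (he : e ∈ cone S G) : #e = 3 := by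
  obtain ⟨c, hc, u, v, huv, rfl⟩ := mem_cone.1 he
  exact card_eq_three.2 ⟨c, u, v, ne_of_mem_of_not_mem hc (hG huv),
    ne_of_mem_of_not_mem hc (hG huv.symm), huv.ne, rfl⟩

theorem card_cone : #(cone S G) = #S * #G.edgeFinset := by
  have hdisj : ∀ z ∈ G.edgeFinset, ∀ v ∈ z, v ∉ S := by
    intro z hz v hv
    obtain ⟨w, rfl⟩ := hv
    exact hG (SimpleGraph.mem_edgeFinset.1 hz)
  rw [cone, card_image_of_injOn, card_product]
  rintro ⟨c, z⟩ hcz ⟨d, y⟩ hdy heq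
  obtain ⟨hc, hz⟩ := mem_product.1 hcz
  obtain ⟨hd, hy⟩ := mem_product.1 hdy
  have hmem : ∀ v, v = c ∨ v ∈ z ↔ v = d ∨ v ∈ y := fun v => by
    simpa only [mem_insert, Sym2.mem_toFinset] using Finset.ext_iff.1 heq v
  have hcd : c = d := ((hmem c).1 (.inl rfl)).resolve_right fun h => hdisj y hy c h hc
  refine Prod.ext hcd (Sym2.ext fun v => ⟨fun hv => ?_, fun hv => ?_⟩)
  · exact ((hmem v).1 (.inr hv)).resolve_left fun h => hdisj z hz v hv (h ▸ hd)
  · exact ((hmem v).2 (.inr hv)).resolve_left fun h => hdisj y hy v hv (h ▸ hc)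

end Cone

theorem card_le_of_forall_exists_mem {V : Type*} {M : Finset (Finset V)} {S : Finset V}
    (hM : (M : Set (Finset V)).Pairwise Disjoint) (hS : ∀ e ∈ M, ∃ c ∈ S, c ∈ e) :
    #M ≤ #S := by
  classical
  calc #M ≤ #(M.biUnion (S ∩ ·)) :=
        card_le_card_biUnion (hM.mono' fun _ _ h => h.mono inter_subset_right inter_subset_right)
          fun e he => (hS e he).imp fun _ hc => mem_inter.2 hc
    _ ≤ #S := card_le_card (biUnion_subset.2 fun _ _ => inter_subset_left)

section FPtCopy

variable {V : Type*} [DecidableEq V] {k : ℕ} [NeZero k] {f : Fin k ⊕ Fin (k + 1) → V}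

theorem forall_comp_swap_mem {H : Finset (Finset V)}
    (hH : ∀ ⦃i : Fin k⦄ ⦃j : Fin (k + 1)⦄, i.castSucc < j →
      {f (.inl i), f (.inr i.castSucc), f (.inr j)} ∈ H)
    ⦃i : Fin k⦄ ⦃j : Fin (k + 1)⦄ (hij : i.castSucc < j) :
    {(f ∘ Equiv.swap (.inl 0) (.inr 0)) (.inl i),
      (f ∘ Equiv.swap (.inl 0) (.inr 0)) (.inr i.castSucc),
      (f ∘ Equiv.swap (.inl 0) (.inr 0)) (.inr j)} ∈ H := by
  have hj : j ≠ 0 := Fin.ne_zero_of_lt hij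
  simp only [Function.comp_apply]
  rw [Equiv.swap_apply_of_ne_of_ne (x := Sum.inr j) (by simp) (by simpa using hj)]
  obtain rfl | hi := eq_or_ne i 0
  · rw [Fin.castSucc_zero', Equiv.swap_apply_left, Equiv.swap_apply_right, insert_comm]
    exact hH hij
  · rw [Equiv.swap_apply_of_ne_of_ne (by simpa using hi) (by simp),
      Equiv.swap_apply_of_ne_of_ne (by simp) (by simpa using hi)]
    exact hH hij

variable [Fintype V] {S : Finset V} {G : SimpleGraph V} [DecidableRel G.Adj]

theorem inl_mem_and_adj_inr_of_inr_zero_notMem (hk : 2 ≤ k) (hG : ∀ ⦃u v⦄, G.Adj u v → u ∉ S)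
    (hf : Function.Injective f)
    (hH : ∀ ⦃i : Fin k⦄ ⦃j : Fin (k + 1)⦄, i.castSucc < j →
      {f (.inl i), f (.inr i.castSucc), f (.inr j)} ∈ cone S G)
    (h0 : f (.inr 0) ∉ S) :
    (∀ i, f (.inl i) ∈ S) ∧ ∀ i j, i ≠ j → G.Adj (f (.inr i)) (f (.inr j)) := by
  have hzero : ∀ j, j ≠ 0 → {f (.inl 0), f (.inr 0), f (.inr j)} ∈ cone S G :=
    fun j hj => by
    simpa only [Fin.castSucc_zero'] using hH (i := 0) (by simpa using Fin.pos_of_ne_zero hj)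
  have hinl0 : f (.inl 0) ∈ S := by
    by_contra ha
    have hinr : ∀ j, j ≠ 0 → f (.inr j) ∈ S := fun j hj => by
      obtain ⟨c, hc, hce⟩ := exists_mem_of_mem_cone (hzero j hj)
      simp only [mem_insert, mem_singleton] at hce
      grind
    have hlt : Fin.castSucc ⟨1, hk⟩ < Fin.last k := Fin.castSucc_lt_last _
    have hone : Fin.castSucc ⟨1, hk⟩ ≠ 0 := Fin.ne_of_val_ne one_ne_zero
    have heq := eq_of_mem_cone hG (hH hlt) (by simp) (by simp) (hinr _ hone)
      (hinr _ (Fin.ne_zero_of_lt hlt))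
    exact hlt.ne (Sum.inr_injective (hf heq))
  have hinr : ∀ j, f (.inr j) ∉ S := fun j hj => by
    have hj0 : j ≠ 0 := fun h => h0 (h ▸ hj)
    have := eq_of_mem_cone hG (hzero j hj0) (u := f (.inl 0)) (v := f (.inr j)) (by simp) (by simp)
      hinl0 hj
    simpa using hf this
  refine ⟨fun i => ?_, ?_⟩
  · obtain ⟨c, hc, hce⟩ := exists_mem_of_mem_cone (hH i.castSucc_lt_last)
    simp only [mem_insert, mem_singleton] at hce
    grind
  · have hlt : ∀ i j, i < j → G.Adj (f (.inr i)) (f (.inr j)) := fun i j hij => by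
      obtain ⟨i, rfl⟩ := Fin.exists_castSucc_eq.2 (Fin.ne_last_of_lt hij)
      exact adj_of_mem_cone (hH hij) (by simp) (by simp) (by simpa [hf.eq_iff] using hij.ne)
        (hinr _) (hinr _)
    intro i j hij
    exact hij.lt_or_gt.elim (hlt i j) fun h => (hlt j i h).symm

end FPtCopy

section LowerBound

variable {n s k : ℕ}

-- Swapping `a₀` and `b₀` is an automorphism of `F_{P,t}`, so `b₀` may be assumed to avoid `S`.
theorem not_hasCopy_FPtEdges_cone {S : Finset (Fin n)} {G : SimpleGraph (Fin n)}
    [DecidableRel G.Adj] (hk : 2 ≤ k) (hG : ∀ ⦃u v⦄, G.Adj u v → u ∉ S)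
    (h : #S < k ∨ G.CliqueFree (k + 1)) : ¬ HasCopy (FPtEdges (k + 1)) (cone S G) := by
  have : NeZero k := ⟨by lia⟩
  rw [hasCopy_FPtEdges_succ_iff]
  rintro ⟨f, hf, hH⟩
  wlog h0 : f (.inr 0) ∉ S generalizing f
  · have hswap := forall_comp_swap_mem hH
    refine this _ (hf.comp (Equiv.injective _)) hswap ?_
    rw [Function.comp_apply, Equiv.swap_apply_right]
    intro ha
    have := eq_of_mem_cone hG (hH (Fin.castSucc_lt_last 0)) (u := f (.inl 0)) (v := f (.inr 0))
      (by simp) (by simp) ha (not_not.1 h0)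
    simpa using hf this
  obtain ⟨hinl, hadj⟩ := inl_mem_and_adj_inr_of_inr_zero_notMem hk hG hf hH h0
  rcases h with hS | hfree
  · have := card_le_card_of_injOn (s := univ) (fun i : Fin k => f (.inl i))
      (fun i _ => hinl i) (hf.comp Sum.inl_injective).injOn
    rw [card_univ, Fintype.card_fin] at this
    lia
  · let K : (⊤ : SimpleGraph (Fin (k + 1))) →g G := ⟨f ∘ .inr, fun {i j} => hadj i j⟩
    exact SimpleGraph.IsContained.not_cliqueFree ⟨K, hf.comp Sum.inr_injective⟩ hfree

theorem exists_not_hasCopy_FPtEdges_mul_card_edgeFinset_le (hk : 2 ≤ k)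
    (G : SimpleGraph (Fin (n - s))) [DecidableRel G.Adj] (h : s < k ∨ G.CliqueFree (k + 1)) :
    ∃ H : Finset (Finset (Fin n)), Uniform3 H ∧ ¬ HasCopy (FPtEdges (k + 1)) H ∧
      MatchingAtMost H s ∧ s * #G.edgeFinset ≤ #H := by
  let S : Finset (Fin n) := {v | v.val < s}
  have hcardS : #S = min n s := Fin.card_filter_val_lt
  let shift : Fin (n - s) ↪ Fin n :=
    ⟨fun i => ⟨i + s, by lia⟩, fun i j hij => by simpa [Fin.ext_iff] using hij⟩
  have hG : ∀ ⦃u v⦄, (G.map shift).Adj u v → u ∉ S := by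
    rintro _ _ ⟨-, u, v, -, rfl, rfl⟩
    exact fun h => (mem_filter.1 h).2.not_ge (Nat.le_add_left _ _)
  have hfree : #S < k ∨ (G.map shift).CliqueFree (k + 1) := by
    refine h.imp (fun hs => by lia) fun hGfree => ?_
    cases isEmpty_or_nonempty (Fin (n - s))
    · have hbot : G.map shift = ⊥ := by ext; simp
      exact hbot ▸ SimpleGraph.cliqueFree_bot (by lia)
    · exact SimpleGraph.cliqueFree_map_iff.2 hGfree
  refine ⟨cone S (G.map shift), fun e he => card_eq_three_of_mem_cone hG he,
    not_hasCopy_FPtEdges_cone hk hG hfree, fun M hMH hM => ?_, ?_⟩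
  · have := card_le_of_forall_exists_mem hM fun e he => exists_mem_of_mem_cone (hMH he)
    lia
  · have hcardG : #(G.map shift).edgeFinset = #G.edgeFinset := by
      convert SimpleGraph.card_edgeFinset_map shift G
    rw [card_cone hG, hcardG, hcardS]
    obtain hsn | hns := le_total s n
    · rw [min_eq_right hsn]
    · have : IsEmpty (Fin (n - s)) := by rw [Nat.sub_eq_zero_of_le hns]; infer_instance
      have hempty : G.edgeFinset = ∅ :=
        SimpleGraph.edgeFinset_eq_empty.2 (Subsingleton.elim _ _)
      simp [hempty]

end LowerBound

theorem stmt_8_general (s t : ℕ) (ht : 3 ≤ t) :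
    ∃ C : ℕ, ∀ n,
      (s ≤ t - 2 →
        (∀ H : Finset (Finset (Fin n)), Uniform3 H → ¬ HasCopy (FPtEdges t) H →
            MatchingAtMost H s → H.card ≤ s * (n - s).choose 2 + C * n) ∧
        (∃ H : Finset (Finset (Fin n)), Uniform3 H ∧ ¬ HasCopy (FPtEdges t) H ∧
            MatchingAtMost H s ∧ s * (n - s).choose 2 ≤ H.card + C * n)) ∧
      (t - 1 ≤ s →
        (∀ H : Finset (Finset (Fin n)), Uniform3 H → ¬ HasCopy (FPtEdges t) H →
            MatchingAtMost H s → H.card ≤ s * turanEdges (n - s) (t - 1) + C * n) ∧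
        (∃ H : Finset (Finset (Fin n)), Uniform3 H ∧ ¬ HasCopy (FPtEdges t) H ∧
            MatchingAtMost H s ∧ s * turanEdges (n - s) (t - 1) ≤ H.card + C * n)) := by
  obtain ⟨k, rfl⟩ : ∃ k, t = k + 1 := ⟨t - 1, by lia⟩
  refine ⟨12 * s ^ 2 + 12 * s + s * k, fun n => ⟨fun hsk => ⟨fun H hU _ hM => ?_, ?_⟩,
    fun hks => ⟨fun H hU hF hM => card_le_mul_turanEdges_add (by lia) hks hU hM hF, ?_⟩⟩⟩
  · have hC : 11 * s ^ 2 + 9 * s ≤ 12 * s ^ 2 + 12 * s + s * k := by nlinarith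
    exact (card_le_mul_choose_two_add hU hM).trans (by gcongr)
  · obtain ⟨H, hU, hF, hM, hH⟩ := exists_not_hasCopy_FPtEdges_mul_card_edgeFinset_le (n := n)
      (s := s) (k := k) (by lia) ⊤ (.inl (by lia))
    rw [SimpleGraph.card_edgeFinset_top_eq_card_choose_two, Fintype.card_fin] at hH
    exact ⟨H, hU, hF, hM, le_add_right hH⟩
  · obtain ⟨H, hU, hF, hM, hH⟩ := exists_not_hasCopy_FPtEdges_mul_card_edgeFinset_le (n := n)
      (s := s) (by lia) (SimpleGraph.turanGraph (n - s) k)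
      (.inr (SimpleGraph.turanGraph_cliqueFree (by lia)))
    exact ⟨H, hU, hF, hM, le_add_right hH⟩

theorem stmt_8 (s t : ℕ) (hs : 1 ≤ s) (ht : 4 ≤ t) :
    ∃ C n₀ : ℕ, ∀ n ≥ n₀,
      (s ≤ t - 2 →
        (∀ H : Finset (Finset (Fin n)), Uniform3 H → ¬ HasCopy (FPtEdges t) H →
            MatchingAtMost H s → H.card ≤ s * (n - s).choose 2 + C * n) ∧
        (∃ H : Finset (Finset (Fin n)), Uniform3 H ∧ ¬ HasCopy (FPtEdges t) H ∧
            MatchingAtMost H s ∧ s * (n - s).choose 2 ≤ H.card + C * n)) ∧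
      (t - 1 ≤ s →
        (∀ H : Finset (Finset (Fin n)), Uniform3 H → ¬ HasCopy (FPtEdges t) H →
            MatchingAtMost H s → H.card ≤ s * turanEdges (n - s) (t - 1) + C * n) ∧
        (∃ H : Finset (Finset (Fin n)), Uniform3 H ∧ ¬ HasCopy (FPtEdges t) H ∧
            MatchingAtMost H s ∧ s * turanEdges (n - s) (t - 1) ≤ H.card + C * n)) := by
  obtain ⟨C, h⟩ := stmt_8_general s t (by lia)
  exact ⟨C, 0, fun n _ => h n⟩
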